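/- arXiv:2604.03615 — 3 statements merged into one kernel-verified Lean document; each statement's English description precedes it below -/
import Mathlib

section
/- Let n ≥ 2 and let L be the Laplacian matrix of the directed path P⃗_n. Then the trace norm of L satisfies ‖L‖_* = Σ_{j=0}^{n−1} 2·sin(πj/(2n)) = cot(π/(4n)) − 1. -/
open Matrix

/-- The multiset of singular values of a real square matrix `M`: the nonnegative
square roots of the eigenvalues of `M * Mᵀ` (the roots of its characteristic
polynomial, counted with multiplicity). -/
noncomputable def singularValues {m : Type*} [Fintype m] [DecidableEq m]
    (M : Matrix m m ℝ) : Multiset ℝ :=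
  ((M * Mᵀ).charpoly.roots).map Real.sqrt

/-- The trace norm of a real square matrix: the sum of its singular values. -/
noncomputable def traceNorm {m : Type*} [Fintype m] [DecidableEq m]
    (M : Matrix m m ℝ) : ℝ :=
  (singularValues M).sum

/-- Adjacency matrix of the directed cycle C⃗_n: entry (i,j) is 1 iff j ≡ i+1 (mod n). -/
def cycleAdj (n : ℕ) : Matrix (Fin n) (Fin n) ℝ :=
  fun i j => if (j : ℕ) = ((i : ℕ) + 1) % n then 1 else 0

/-- Adjacency matrix of the directed path P⃗_n: entry (i,j) is 1 iff j = i+1. -/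
def pathAdj (n : ℕ) : Matrix (Fin n) (Fin n) ℝ :=
  fun i j => if (j : ℕ) = (i : ℕ) + 1 then 1 else 0

/-- The outdegree matrix of a digraph with adjacency matrix `A`: the diagonal
matrix of row sums of `A`. -/
noncomputable def outDeg {m : Type*} [Fintype m] [DecidableEq m]
    (A : Matrix m m ℝ) : Matrix m m ℝ :=
  Matrix.diagonal (fun i => ∑ j, A i j)

/-- Adjacency matrix of the oriented star S⃗_n(x,y) on n = x+y+1 vertices:
vertex 0 is the center, vertices 1..x are the out-neighbours of the center and
vertices x+1..x+y are its in-neighbours. -/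
def starAdj (x y : ℕ) : Matrix (Fin (x + y + 1)) (Fin (x + y + 1)) ℝ :=
  fun i j =>
    if (i : ℕ) = 0 ∧ 1 ≤ (j : ℕ) ∧ (j : ℕ) ≤ x then 1
    else if (j : ℕ) = 0 ∧ x + 1 ≤ (i : ℕ) then 1 else 0

/-- Adjacency matrix of the out-star S⃗_n(n-1,0): vertex 0 is the center with
arcs to all other vertices, and there are no other arcs. -/
def outStarAdj (n : ℕ) : Matrix (Fin n) (Fin n) ℝ :=
  fun i j => if (i : ℕ) = 0 ∧ (j : ℕ) ≠ 0 then 1 else 0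

/-- Adjacency matrix of the disjoint union C⃗_{n-1} ∪ K₁: a directed (n-1)-cycle
on the first n-1 vertices together with an isolated last vertex. -/
def cycleK1Adj (n : ℕ) : Matrix (Fin n) (Fin n) ℝ :=
  fun i j =>
    if (i : ℕ) < n - 1 ∧ (j : ℕ) < n - 1 ∧ (j : ℕ) = ((i : ℕ) + 1) % (n - 1) then 1 else 0

theorem aux_sum_ite (n k : ℕ) (f : ℕ → ℝ) :
    ∑ j : Fin n, (if (j : ℕ) = k then f j else 0) = if k < n then f k else 0 := by
  rw [Fin.sum_univ_eq_sum_range (fun j => if j = k then f j else 0) n]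
  simp [Finset.sum_ite_eq']

theorem aux_mulVec (n : ℕ) (f : ℕ → ℝ) (i : Fin n) :
    ((outDeg (pathAdj n) - pathAdj n) *ᵥ (fun j : Fin n => f j)) i
      = if (i : ℕ) + 1 < n then f i - f (i + 1) else 0 := by
  have h1 : ∑ j : Fin n, pathAdj n i j = if (i : ℕ) + 1 < n then 1 else 0 := by
    simpa [pathAdj] using aux_sum_ite n (i + 1) (fun _ => 1)
  have h2 : (pathAdj n *ᵥ (fun j : Fin n => f j)) i = if (i : ℕ) + 1 < n then f (i + 1) else 0 := by
    rw [← aux_sum_ite n (i + 1) f]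
    simp [pathAdj, Matrix.mulVec, dotProduct]
  rw [Matrix.sub_mulVec, Pi.sub_apply, h2, outDeg, Matrix.mulVec_diagonal, h1]
  split_ifs <;> simp

theorem aux_mulVecT (n : ℕ) (g : ℕ → ℝ) (h0 : g 0 = 0) (hn : g n = 0) (i : Fin n) :
    ((outDeg (pathAdj n) - pathAdj n)ᵀ *ᵥ (fun j : Fin n => g (j + 1))) i
      = g (i + 1) - g i := by
  have h1 : ∑ j : Fin n, pathAdj n i j = if (i : ℕ) + 1 < n then 1 else 0 := by
    simpa [pathAdj] using aux_sum_ite n (i + 1) (fun _ => 1)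
  have h2 : ((pathAdj n)ᵀ *ᵥ (fun j : Fin n => g (j + 1))) i = g i := by
    have : ∀ j : Fin n, (pathAdj n)ᵀ i j * g (j + 1) =
        if (j : ℕ) + 1 = i then g (j + 1) else 0 := by
      intro j
      simp [pathAdj, Matrix.transpose_apply, eq_comm]
    simp only [Matrix.mulVec, dotProduct, this]
    rcases Nat.eq_zero_or_pos (i : ℕ) with h | h
    · simp [h, h0]
    · obtain ⟨k, hk⟩ : ∃ k, (i : ℕ) = k + 1 := ⟨i - 1, by omega⟩
      have := aux_sum_ite n k (fun j => g (j + 1))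
      have hkn : k < n := by have := i.2; omega
      simpa [hk, hkn] using this
  rw [Matrix.transpose_sub, Matrix.sub_mulVec, Pi.sub_apply, h2, outDeg,
    Matrix.diagonal_transpose, Matrix.mulVec_diagonal, h1]
  split_ifs with h
  · simp
  · have : (i : ℕ) + 1 = n := by have := i.2; omega
    simp [this, hn]

theorem aux_root (n : ℕ) (k : ℕ) (hk : k < n) :
    (2 * Real.sin (Real.pi * k / (2 * n))) ^ 2 ∈
      ((outDeg (pathAdj n) - pathAdj n) * (outDeg (pathAdj n) - pathAdj n)ᵀ).charpoly.roots := by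
  have hn0 : (0 : ℝ) < n := by exact_mod_cast (by omega : 0 < n)
  set L := outDeg (pathAdj n) - pathAdj n with hL
  set a := Real.pi * k / (2 * n) with ha
  have han : 2 * a * n = k * Real.pi := by rw [ha]; field_simp
  have hev : (Lᵀ * L) *ᵥ (fun j : Fin n => Real.cos (a * (2 * (j : ℕ) + 1)))
      = (2 * Real.sin a) ^ 2 • (fun j : Fin n => Real.cos (a * (2 * (j : ℕ) + 1))) := by
    rw [← Matrix.mulVec_mulVec]
    have e1 : L *ᵥ (fun j : Fin n => Real.cos (a * (2 * (j : ℕ) + 1)))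
        = (fun j : Fin n => (fun t : ℕ => 2 * Real.sin a * Real.sin (2 * a * t)) (j + 1)) := by
      funext i
      rw [hL, aux_mulVec n (fun j => Real.cos (a * (2 * (j : ℕ) + 1)))]
      split_ifs with h
      · simp only
        rw [Real.cos_sub_cos]
        push_cast
        rw [show (a * (2 * (i : ℕ) + 1) - a * (2 * ((i : ℕ) + 1) + 1)) / 2 = -a by ring,
          show (a * (2 * (i : ℕ) + 1) + a * (2 * ((i : ℕ) + 1) + 1)) / 2 = 2 * a * ((i : ℕ) + 1) by ring,
          Real.sin_neg]
        ring
      · have : (i : ℕ) + 1 = n := by have := i.2; omega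
        simp only [this]
        rw [han, Real.sin_nat_mul_pi]; simp
    rw [e1]
    funext i
    rw [hL, aux_mulVecT n (fun t : ℕ => 2 * Real.sin a * Real.sin (2 * a * t)) (by simp)
      (by rw [han, Real.sin_nat_mul_pi]; simp)]
    simp only [Pi.smul_apply, smul_eq_mul]
    rw [← mul_sub, Real.sin_sub_sin]
    push_cast
    rw [show (2 * a * ((i : ℕ) + 1) - 2 * a * (i : ℕ)) / 2 = a by ring,
      show (2 * a * ((i : ℕ) + 1) + 2 * a * (i : ℕ)) / 2 = a * (2 * (i : ℕ) + 1) by ring]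
    ring
  rw [Matrix.charpoly_mul_comm, Polynomial.mem_roots (Matrix.charpoly_monic _).ne_zero,
    Polynomial.IsRoot, Matrix.eval_charpoly, ← Matrix.exists_mulVec_eq_zero_iff]
  refine ⟨(fun j : Fin n => Real.cos (a * (2 * (j : ℕ) + 1))), ?_, ?_⟩
  · intro h
    have := congrFun h ⟨0, by omega⟩
    simp at this
    have hpos : 0 < Real.cos a := by
      have hkn : (k : ℝ) < n := by exact_mod_cast hk
      apply Real.cos_pos_of_mem_Ioo
      have : 0 ≤ a := by positivity
      constructor
      · linarith [Real.pi_pos]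
      · nlinarith [Real.pi_pos]
    exact hpos.ne' this
  · rw [Matrix.sub_mulVec, hev]
    funext i
    simp [Matrix.scalar_apply, Matrix.mulVec_diagonal]

theorem aux_mem (n k : ℕ) (hk : k < n) :
    Real.pi * k / (2 * n) ∈ Set.Icc (0 : ℝ) (Real.pi / 2) := by
  have hn0 : (0 : ℝ) < n := by exact_mod_cast (by omega : 0 < n)
  have hkn : (k : ℝ) < n := by exact_mod_cast hk
  constructor
  · positivity
  · rw [div_le_div_iff₀ (by positivity) (by positivity)]
    nlinarith [Real.pi_pos]

theorem aux_sin_nonneg (n k : ℕ) (hk : k < n) : 0 ≤ Real.sin (Real.pi * k / (2 * n)) := by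
  have := aux_mem n k hk
  exact Real.sin_nonneg_of_nonneg_of_le_pi this.1 (by linarith [this.2, Real.pi_pos])

theorem aux_inj (n : ℕ) : Set.InjOn (fun k : ℕ => (2 * Real.sin (Real.pi * k / (2 * n))) ^ 2)
    (Finset.range n : Set ℕ) := by
  intro x hx y hy h
  simp only [Finset.coe_range, Set.mem_Iio] at hx hy
  have hn0 : (0 : ℝ) < n := by exact_mod_cast (by omega : 0 < n)
  have h1 := aux_sin_nonneg n x hx
  have h2 := aux_sin_nonneg n y hy
  simp only at h
  have h3 := (pow_left_inj₀ (by positivity) (by positivity) two_ne_zero).1 h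
  have h4 : Real.sin (Real.pi * x / (2 * n)) = Real.sin (Real.pi * y / (2 * n)) := by linarith
  have hx' := aux_mem n x hx
  have hy' := aux_mem n y hy
  have h5 := Real.injOn_sin ⟨by linarith [hx'.1, Real.pi_pos], hx'.2⟩
    ⟨by linarith [hy'.1, Real.pi_pos], hy'.2⟩ h4
  have hp := Real.pi_pos
  field_simp at h5
  exact_mod_cast h5

theorem aux_roots (n : ℕ) :
    ((outDeg (pathAdj n) - pathAdj n) * (outDeg (pathAdj n) - pathAdj n)ᵀ).charpoly.roots
    = (Finset.range n).val.map (fun k : ℕ => (2 * Real.sin (Real.pi * k / (2 * n))) ^ 2) := by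
  symm
  apply Multiset.eq_of_le_of_card_le
  · rw [Multiset.le_iff_subset]
    · intro x hx
      obtain ⟨k, hk, rfl⟩ := Multiset.mem_map.1 hx
      exact aux_root n k (by simpa using hk)
    · exact Multiset.Nodup.map_on (fun x hx y hy h => aux_inj n (by simpa using hx)
        (by simpa using hy) h) (Finset.range n).nodup
  · refine (Polynomial.card_roots' _).trans ?_
    simp [Matrix.charpoly_natDegree_eq_dim]

theorem aux_closed (n : ℕ) (hn : 2 ≤ n) :
    ∑ j ∈ Finset.range n, 2 * Real.sin (Real.pi * j / (2 * n))
      = Real.cot (Real.pi / (4 * n)) - 1 := by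
  have hn0 : (2 : ℝ) ≤ n := by exact_mod_cast hn
  set b := Real.pi / (4 * n) with hb
  have hbn : b * (4 * n) = Real.pi := by rw [hb]; field_simp
  have hs : 0 < Real.sin b := by
    have : 0 < b := by positivity
    apply Real.sin_pos_of_pos_of_lt_pi this
    nlinarith
  have key : ∀ m : ℕ, (∑ j ∈ Finset.range m, 2 * Real.sin (Real.pi * j / (2 * n))) * Real.sin b
      = Real.cos b - Real.cos (b * (2 * m - 1)) := by
    intro m
    induction m with
    | zero => simp
    | succ m ih =>
      rw [Finset.sum_range_succ, add_mul, ih,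
        show Real.pi * m / (2 * n) = 2 * b * m by rw [hb]; field_simp; ring]
      push_cast
      have e1 : b * (2 * m - 1) = 2 * b * m - b := by ring
      have e2 : b * (2 * (m + 1) - 1) = 2 * b * m + b := by ring
      rw [e1, e2, Real.cos_sub, Real.cos_add]
      ring
  have h := key n
  rw [show b * (2 * n - 1) = Real.pi / 2 - b by linarith, Real.cos_pi_div_two_sub] at h
  rw [Real.cot_eq_cos_div_sin, eq_sub_iff_add_eq, eq_div_iff hs.ne']
  linarith

theorem path_laplacian_trace_norm (n : ℕ) (hn : 2 ≤ n) :
    traceNorm (outDeg (pathAdj n) - pathAdj n)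
      = ∑ j ∈ Finset.range n, 2 * Real.sin (Real.pi * j / (2 * n)) ∧
    traceNorm (outDeg (pathAdj n) - pathAdj n) = Real.cot (Real.pi / (4 * n)) - 1 := by
  have h : traceNorm (outDeg (pathAdj n) - pathAdj n)
      = ∑ j ∈ Finset.range n, 2 * Real.sin (Real.pi * j / (2 * n)) := by
    rw [traceNorm, singularValues, aux_roots, Multiset.map_map]
    change ∑ j ∈ Finset.range n, _ = _
    apply Finset.sum_congr rfl
    intro k hk
    have := aux_sin_nonneg n k (by simpa using hk)
    simp only [Function.comp]
    exact Real.sqrt_sq (by positivity)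
  exact ⟨h, h.trans (aux_closed n hn)⟩
end

section
/- For every n ≥ 2, the difference ‖L(C⃗_n)‖_* − ‖L(P⃗_n)‖_* = 1 − tan(π/(4n)) is strictly positive, the sequence n ↦ 1 − tan(π/(4n)) is strictly increasing in n, and it converges to 1 as n → ∞; in particular ‖L(C⃗_n)‖_* > ‖L(P⃗_n)‖_* for all n ≥ 2. -/
open Matrix

lemma aux_charpoly {K : Type*} [Field K] {m : Type*} [Fintype m] [DecidableEq m]
    (M V : Matrix m m K) (d : m → K) (h : M * V = V * Matrix.diagonal d) (hV : V.det ≠ 0) :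
    M.charpoly = ∏ i, (Polynomial.X - Polynomial.C (d i)) := by
  have hu : IsUnit V.det := isUnit_iff_ne_zero.mpr hV
  have h1 : M = (V * Matrix.diagonal d) * V⁻¹ := by
    rw [← h, Matrix.mul_assoc, Matrix.mul_nonsing_inv _ hu, Matrix.mul_one]
  rw [h1, Matrix.charpoly_mul_comm, ← Matrix.mul_assoc, Matrix.nonsing_inv_mul _ hu,
    Matrix.one_mul, Matrix.charpoly_diagonal]

lemma aux_roots_s5 {m : Type*} [Fintype m] [DecidableEq m]
    (M : Matrix m m ℝ) (d : m → ℝ) (hd : Function.Injective d)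
    (h : ∀ i, ∃ v : m → ℝ, v ≠ 0 ∧ M *ᵥ v = d i • v) :
    M.charpoly.roots = Finset.univ.val.map d := by
  symm
  apply Multiset.eq_of_le_of_card_le
  · rw [Multiset.le_iff_subset (Multiset.Nodup.map hd Finset.univ.nodup)]
    intro x hx
    obtain ⟨i, -, rfl⟩ := Multiset.mem_map.mp hx
    rw [Polynomial.mem_roots M.charpoly_monic.ne_zero, Polynomial.IsRoot, Matrix.eval_charpoly,
      ← Matrix.exists_mulVec_eq_zero_iff]
    obtain ⟨v, hv, hM⟩ := h i
    refine ⟨v, hv, ?_⟩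
    rw [Matrix.sub_mulVec, hM]
    ext j
    simp
  · refine (Polynomial.card_roots' _).trans ?_
    rw [Matrix.charpoly_natDegree_eq_dim]
    simp

lemma aux_sum (θ : ℝ) (n : ℕ) :
    Real.sin (θ / 2) * ∑ k ∈ Finset.range n, 2 * Real.sin (k * θ)
      = Real.cos (θ / 2) - Real.cos (n * θ - θ / 2) := by
  induction n with
  | zero => simp
  | succ n ih =>
    rw [Finset.sum_range_succ, mul_add, ih]
    have e : ((n + 1 : ℕ) : ℝ) * θ - θ / 2 = n * θ + θ / 2 := by push_cast; ring
    rw [e, Real.cos_add, Real.cos_sub]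
    ring

lemma aux_cycle_charpoly (m : ℕ) :
    ((1 - cycleAdj (m + 1)) * (1 - cycleAdj (m + 1))ᵀ).charpoly
      = ∏ k : Fin (m + 1), (Polynomial.X - Polynomial.C ((2 * Real.sin (k * (Real.pi / (m + 1)))) ^ 2)) := by
  apply Polynomial.map_injective _ (algebraMap ℝ ℂ).injective
  rw [← Matrix.charpoly_map, Polynomial.map_prod]
  simp only [Polynomial.map_sub, Polynomial.map_X, Polynomial.map_C]
  set ζ : ℂ := Complex.exp (2 * Real.pi * Complex.I / ((m + 1 : ℕ) : ℂ)) with hζ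
  have hp : IsPrimitiveRoot ζ (m + 1) := Complex.isPrimitiveRoot_exp _ (Nat.succ_ne_zero m)
  have hz0 : ζ ≠ 0 := Complex.exp_ne_zero _
  set A : Matrix (Fin (m+1)) (Fin (m+1)) ℂ := (cycleAdj (m + 1)).map (algebraMap ℝ ℂ) with hA
  have hAe : ∀ i j, A i j = if j = i + 1 then 1 else 0 := by
    intro i j
    have : ((j : ℕ) = ((i : ℕ) + 1) % (m + 1)) ↔ j = i + 1 := by
      rw [Fin.ext_iff, Fin.val_add]
      simp
    simp only [hA, cycleAdj, this, Matrix.map_apply]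
    split_ifs <;> simp
  set V : Matrix (Fin (m+1)) (Fin (m+1)) ℂ := (Matrix.vandermonde (fun k : Fin (m+1) => ζ ^ (k : ℕ)))ᵀ with hV
  have hVe : ∀ i k, V i k = (ζ ^ (k : ℕ)) ^ (i : ℕ) := by
    intro i k; simp [hV, Matrix.vandermonde_apply]
  have hVs : ∀ i k, V (i + 1) k = ζ ^ (k : ℕ) * V i k := by
    intro i k
    rw [hVe, hVe, ← pow_succ', Fin.val_add]
    have h1 : (ζ ^ (k : ℕ)) ^ (m + 1) = 1 := by
      rw [← pow_mul, mul_comm, pow_mul, hp.pow_eq_one, one_pow]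
    have e : ((i : ℕ) + ((1 : Fin (m+1)) : ℕ)) % (m + 1) = ((i : ℕ) + 1) % (m + 1) := by simp
    rw [e, ← pow_eq_pow_mod _ h1]
  have hL : (1 - A) * V = V * Matrix.diagonal (fun k : Fin (m+1) => 1 - ζ ^ (k : ℕ)) := by
    rw [Matrix.sub_mul, Matrix.one_mul]
    ext i k
    rw [Matrix.sub_apply, Matrix.mul_diagonal, Matrix.mul_apply]
    simp only [hAe, ite_mul, one_mul, zero_mul, Finset.sum_ite_eq', Finset.mem_univ, if_true, hVs]
    ring
  have hLT : (1 - A)ᵀ * V = V * Matrix.diagonal (fun k : Fin (m+1) => 1 - (ζ ^ (k : ℕ))⁻¹) := by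
    rw [Matrix.transpose_sub, Matrix.transpose_one, Matrix.sub_mul, Matrix.one_mul]
    ext i k
    rw [Matrix.sub_apply, Matrix.mul_diagonal, Matrix.mul_apply]
    have : ∀ j, (i = j + 1) ↔ (j = i - 1) := by
      intro j; constructor
      · rintro rfl; simp
      · rintro rfl; simp
    simp only [Matrix.transpose_apply, hAe, this, ite_mul, one_mul, zero_mul, Finset.sum_ite_eq', Finset.mem_univ, if_true]
    have h2 := hVs (i - 1) k
    rw [sub_add_cancel] at h2
    have : ζ ^ (k : ℕ) ≠ 0 := pow_ne_zero _ hz0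
    rw [h2]
    field_simp
  apply aux_charpoly _ V
  · have e : ((1 - cycleAdj (m + 1)) * (1 - cycleAdj (m + 1))ᵀ).map (algebraMap ℝ ℂ) = (1 - A) * (1 - A)ᵀ := by
      have e1 : (1 - cycleAdj (m + 1)).map (algebraMap ℝ ℂ) = 1 - A := by
        rw [hA, Matrix.map_sub _ (map_sub _), Matrix.map_one _ (map_zero _) (map_one _)]
      rw [Matrix.map_mul, Matrix.transpose_map, e1]
    rw [e, Matrix.mul_assoc, hLT, ← Matrix.mul_assoc, hL, Matrix.mul_assoc, Matrix.diagonal_mul_diagonal]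
    congr 2
    ext k
    have hx : ζ ^ (k : ℕ) = Complex.exp (((2 * (k * (Real.pi / (m + 1))) : ℝ) : ℂ) * Complex.I) := by
      rw [hζ, ← Complex.exp_nat_mul]
      congr 1
      push_cast
      ring
    rw [hx, ← Complex.exp_neg, ← neg_mul, ← Complex.ofReal_neg, Complex.exp_mul_I, Complex.exp_mul_I,
      ← Complex.ofReal_cos, ← Complex.ofReal_sin, ← Complex.ofReal_cos, ← Complex.ofReal_sin,
      Real.cos_neg, Real.sin_neg]
    set x : ℝ := k * (Real.pi / (m + 1)) with hxd
    have h1 := Real.sin_sq_add_cos_sq (2 * x)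
    have h2 : Real.cos (2 * x) = 1 - 2 * Real.sin x ^ 2 := by
      rw [Real.cos_two_mul, ← Real.sin_sq_add_cos_sq x]; ring
    have h3 : (2 * Real.sin x) ^ 2 = 2 - 2 * Real.cos (2 * x) := by rw [h2]; ring
    show _ = (((2 * Real.sin x) ^ 2 : ℝ) : ℂ)
    rw [h3]
    have h1' : ((Real.sin (2 * x) : ℂ)) ^ 2 + (Real.cos (2 * x) : ℂ) ^ 2 = 1 := by exact_mod_cast h1
    push_cast at h1' ⊢
    linear_combination h1' - (Complex.sin (2 * x)) ^ 2 * Complex.I_sq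
  · rw [hV, Matrix.det_transpose, Matrix.det_vandermonde_ne_zero_iff]
    intro a b hab
    exact Fin.ext (hp.pow_inj a.2 b.2 hab)

lemma aux_cycle (n : ℕ) (hn : 2 ≤ n) :
    traceNorm (1 - cycleAdj n) = ∑ k ∈ Finset.range n, 2 * Real.sin (k * (Real.pi / n)) := by
  obtain ⟨m, rfl⟩ : ∃ m, n = m + 1 := ⟨n - 1, by omega⟩
  have hr : ((1 - cycleAdj (m + 1)) * (1 - cycleAdj (m + 1))ᵀ).charpoly.roots
      = Finset.univ.val.map (fun k : Fin (m + 1) => (2 * Real.sin (k * (Real.pi / (m + 1)))) ^ 2) := by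
    rw [aux_cycle_charpoly, ← Polynomial.roots_multiset_prod_X_sub_C (Finset.univ.val.map _),
      Multiset.map_map]
    rfl
  rw [traceNorm, singularValues, hr, Multiset.map_map, ← Fin.sum_univ_eq_sum_range (fun k => 2 * Real.sin (k * (Real.pi / ((m + 1 : ℕ) : ℝ))))]
  change ∑ k : Fin (m + 1), _ = _
  apply Finset.sum_congr rfl
  intro k _
  simp only [Function.comp]
  rw [Real.sqrt_sq]
  · push_cast; rfl
  · have hk : (k : ℝ) ≤ m + 1 := by exact_mod_cast k.2.le
    have := Real.sin_nonneg_of_nonneg_of_le_pi (x := k * (Real.pi / (m + 1))) (by positivity) (by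
      rw [← mul_div_assoc, div_le_iff₀ (by positivity)]
      nlinarith [Real.pi_pos])
    positivity

lemma aux_path_mulVec (n : ℕ) (f : ℕ → ℝ) :
    (outDeg (pathAdj n) - pathAdj n) *ᵥ (fun i : Fin n => f i)
      = fun i : Fin n => if (i : ℕ) + 1 < n then f i - f (i + 1) else 0 := by
  have key : ∀ (i : Fin n) (g : ℕ → ℝ), ∑ j : Fin n, pathAdj n i j * g j
      = if (i : ℕ) + 1 < n then g (i + 1) else 0 := by
    intro i g
    split_ifs with h
    · rw [Finset.sum_eq_single ⟨i + 1, h⟩]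
      · simp [pathAdj]
      · intro b _ hb
        have : (b : ℕ) ≠ i + 1 := fun e => hb (Fin.ext e)
        simp [pathAdj, this]
      · simp
    · apply Finset.sum_eq_zero
      intro b _
      have : (b : ℕ) ≠ i + 1 := by have := b.2; omega
      simp [pathAdj, this]
  ext i
  rw [Matrix.sub_mulVec, Pi.sub_apply, outDeg, Matrix.mulVec_diagonal]
  have h1 := key i (fun _ => 1)
  have h2 := key i f
  simp only [mul_one] at h1
  rw [h1, Matrix.mulVec, dotProduct, h2]
  split_ifs <;> simp

lemma aux_path_transpose_mulVec (n : ℕ) (f : ℕ → ℝ) (h0 : f 0 = 0) (hn : f n = 0) :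
    (outDeg (pathAdj n) - pathAdj n)ᵀ *ᵥ (fun i : Fin n => f (i + 1))
      = fun i : Fin n => f (i + 1) - f i := by
  have key0 : ∀ (i : Fin n), ∑ j : Fin n, pathAdj n i j
      = if (i : ℕ) + 1 < n then 1 else 0 := by
    intro i
    split_ifs with h
    · rw [Finset.sum_eq_single ⟨i + 1, h⟩]
      · simp [pathAdj]
      · intro b _ hb
        have : (b : ℕ) ≠ i + 1 := fun e => hb (Fin.ext e)
        simp [pathAdj, this]
      · simp
    · apply Finset.sum_eq_zero
      intro b _
      have : (b : ℕ) ≠ i + 1 := by have := b.2; omega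
      simp [pathAdj, this]
  have key : ∀ (i : Fin n), ∑ j : Fin n, pathAdj n j i * f (j + 1) = f i := by
    intro i
    rcases Nat.eq_zero_or_pos (i : ℕ) with h | h
    · rw [h, h0]
      apply Finset.sum_eq_zero
      intro b _
      simp [pathAdj, h]
    · rw [Finset.sum_eq_single ⟨i - 1, by omega⟩]
      · have e : (i : ℕ) - 1 + 1 = i := by omega
        simp [pathAdj, e]
      · intro b _ hb
        have : (i : ℕ) ≠ b + 1 := fun e => hb (Fin.ext (by simp; omega))
        simp [pathAdj, this]
      · simp
  ext i
  rw [Matrix.transpose_sub, Matrix.sub_mulVec, Pi.sub_apply, outDeg, Matrix.diagonal_transpose,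
    Matrix.mulVec_diagonal, key0 i, Matrix.mulVec, dotProduct]
  simp only [Matrix.transpose_apply]
  rw [key i]
  split_ifs with h
  · simp
  · have e : (i : ℕ) + 1 = n := by omega
    rw [e, hn]; simp

lemma aux_path (n : ℕ) (hn : 2 ≤ n) :
    traceNorm (outDeg (pathAdj n) - pathAdj n)
      = ∑ k ∈ Finset.range n, 2 * Real.sin (k * (Real.pi / (2 * n))) := by
  have hn0 : (0 : ℝ) < n := by exact_mod_cast (by omega : 0 < n)
  have hpi := Real.pi_pos
  have hlt : ∀ k : Fin n, (k : ℝ) * (Real.pi / (2 * n)) < Real.pi / 2 := by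
    intro k
    have hk : (k : ℝ) < n := by exact_mod_cast k.2
    rw [← mul_div_assoc, div_lt_div_iff₀ (by positivity) (by positivity)]
    nlinarith
  have hge : ∀ k : Fin n, 0 ≤ (k : ℝ) * (Real.pi / (2 * n)) := fun k => by positivity
  have hs : ∀ k : Fin n, 0 ≤ 2 * Real.sin ((k : ℝ) * (Real.pi / (2 * n))) := fun k => by
    have := Real.sin_nonneg_of_nonneg_of_le_pi (hge k) (by linarith [hlt k])
    positivity
  have hr : ((outDeg (pathAdj n) - pathAdj n) * (outDeg (pathAdj n) - pathAdj n)ᵀ).charpoly.roots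
      = Finset.univ.val.map (fun k : Fin n => (2 * Real.sin (k * (Real.pi / (2 * n)))) ^ 2) := by
    rw [Matrix.charpoly_mul_comm]
    apply aux_roots_s5
    · intro a b hab
      have h1 := (pow_left_inj₀ (hs a) (hs b) two_ne_zero).mp hab
      have h2 := Real.injOn_sin ⟨by linarith [hge a], (hlt a).le⟩ ⟨by linarith [hge b], (hlt b).le⟩
        (mul_left_cancel₀ two_ne_zero h1)
      have h3 := mul_right_cancel₀ (by positivity) h2
      exact Fin.ext (by exact_mod_cast h3)
    · intro k
      set x : ℝ := (k : ℝ) * (Real.pi / (2 * n)) with hx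
      refine ⟨fun i => Real.cos (2 * x * (i : ℕ) + x), ?_, ?_⟩
      · intro h
        have h0 := congrFun h ⟨0, by omega⟩
        simp only [Nat.cast_zero, mul_zero, zero_add, Pi.zero_apply] at h0
        exact (Real.cos_pos_of_mem_Ioo ⟨by linarith [hge k], hlt k⟩).ne' h0
      · have hend : Real.sin (2 * x * n) = 0 := by
          have : 2 * x * n = (k : ℕ) * Real.pi := by rw [hx]; field_simp
          rw [this]; exact Real.sin_nat_mul_pi _
        have hL := aux_path_mulVec n (fun i => Real.cos (2 * x * (i : ℕ) + x))
        have hL2 : (fun i : Fin n => if (i : ℕ) + 1 < n then Real.cos (2 * x * (i : ℕ) + x)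
              - Real.cos (2 * x * ((i + 1 : ℕ) : ℝ) + x) else 0)
            = fun i : Fin n => 2 * Real.sin x * Real.sin (2 * x * ((i + 1 : ℕ) : ℝ)) := by
          ext i
          split_ifs with h
          · have e1 : 2 * x * (i : ℕ) + x = 2 * x * ((i + 1 : ℕ) : ℝ) - x := by push_cast; ring
            rw [e1, Real.cos_sub, Real.cos_add]; ring
          · have e : (i : ℕ) + 1 = n := by omega
            rw [e, hend, mul_zero]
        rw [← Matrix.mulVec_mulVec, hL, hL2,
          aux_path_transpose_mulVec n (fun i => 2 * Real.sin x * Real.sin (2 * x * (i : ℝ))) (by simp)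
            (by rw [hend, mul_zero])]
        ext i
        simp only [Pi.smul_apply, smul_eq_mul]
        have e1 : 2 * x * ((i + 1 : ℕ) : ℝ) = (2 * x * (i : ℕ) + x) + x := by push_cast; ring
        have e2 : 2 * x * (i : ℕ) = (2 * x * (i : ℕ) + x) - x := by ring
        generalize hy : 2 * x * (i : ℕ) + x = y at *
        rw [e1, e2, Real.sin_add, Real.sin_sub]
        ring
  rw [traceNorm, singularValues, hr, Multiset.map_map,
    ← Fin.sum_univ_eq_sum_range (fun k => 2 * Real.sin (k * (Real.pi / (2 * (n : ℝ)))))]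
  change ∑ k : Fin n, _ = _
  apply Finset.sum_congr rfl
  intro k _
  simp only [Function.comp]
  rw [Real.sqrt_sq (hs k)]

lemma aux_diff (n : ℕ) (hn : 2 ≤ n) :
    traceNorm (1 - cycleAdj n) - traceNorm (outDeg (pathAdj n) - pathAdj n)
        = 1 - Real.tan (Real.pi / (4 * n)) := by
  have hn0 : (0 : ℝ) < n := by exact_mod_cast (by omega : 0 < n)
  have hn2 : (2 : ℝ) ≤ n := by exact_mod_cast hn
  have hpi := Real.pi_pos
  rw [aux_cycle n hn, aux_path n hn]
  have h1 := aux_sum (Real.pi / n) n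
  have h2 := aux_sum (Real.pi / (2 * n)) n
  set x := Real.pi / (4 * n) with hx
  have a1 : Real.pi / n / 2 = 2 * x := by rw [hx]; field_simp; norm_num
  have a2 : n * (Real.pi / n) - 2 * x = Real.pi - 2 * x := by field_simp
  have a3 : Real.pi / (2 * n) / 2 = x := by rw [hx]; field_simp; norm_num
  have a4 : n * (Real.pi / (2 * n)) - x = Real.pi / 2 - x := by field_simp
  rw [a1, a2, Real.cos_pi_sub] at h1
  rw [a3, a4, Real.cos_pi_div_two_sub] at h2
  have hx0 : 0 < x := by positivity
  have hx1 : x < Real.pi / 2 := by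
    rw [hx, div_lt_div_iff₀ (by positivity) (by positivity)]
    nlinarith
  have hs : Real.sin x ≠ 0 := (Real.sin_pos_of_pos_of_lt_pi hx0 (by linarith)).ne'
  have hc : Real.cos x ≠ 0 := (Real.cos_pos_of_mem_Ioo ⟨by linarith, hx1⟩).ne'
  rw [Real.sin_two_mul, Real.cos_two_mul'] at h1
  set S := ∑ k ∈ Finset.range n, 2 * Real.sin (k * (Real.pi / n))
  set T := ∑ k ∈ Finset.range n, 2 * Real.sin (k * (Real.pi / (2 * n)))
  rw [Real.tan_eq_sin_div_cos]
  have : Real.sin x * Real.cos x * (S - T - (1 - Real.sin x / Real.cos x)) = 0 := by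
    field_simp
    linear_combination h1 / 2 - Real.cos x * h2
  have h := (mul_eq_zero.mp this).resolve_left (mul_ne_zero hs hc)
  linarith

lemma aux_mono (m n : ℕ) (hm : 1 ≤ m) (h : m < n) :
    Real.tan (Real.pi / (4 * n)) < Real.tan (Real.pi / (4 * m)) := by
  have hm0 : (1 : ℝ) ≤ m := by exact_mod_cast hm
  have hmn : (m : ℝ) < n := by exact_mod_cast h
  have hpi := Real.pi_pos
  have hn0 : (0 : ℝ) < n := by linarith
  apply Real.tan_lt_tan_of_lt_of_lt_pi_div_two
  · have : 0 < Real.pi / (4 * n) := by positivity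
    linarith
  · rw [div_lt_div_iff₀ (by positivity) (by positivity)]
    nlinarith
  · apply div_lt_div_of_pos_left hpi (by positivity)
    linarith

lemma aux_pos (n : ℕ) (hn : 2 ≤ n) : 0 < 1 - Real.tan (Real.pi / (4 * n)) := by
  have := aux_mono 1 n le_rfl (by omega)
  simp only [Nat.cast_one, mul_one, Real.tan_pi_div_four] at this
  linarith

lemma aux_lim : Filter.Tendsto (fun n : ℕ => 1 - Real.tan (Real.pi / (4 * n))) Filter.atTop (nhds 1) := by
  have h1 : Filter.Tendsto (fun n : ℕ => Real.pi / (4 * (n : ℝ))) Filter.atTop (nhds 0) := by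
    apply Filter.Tendsto.const_div_atTop
    exact Filter.Tendsto.const_mul_atTop (by norm_num) tendsto_natCast_atTop_atTop
  have h2 : ContinuousAt Real.tan 0 := Real.continuousAt_tan.mpr (by simp)
  have h3 := (h2.tendsto.comp h1).const_sub 1
  simpa using h3

theorem cycle_path_laplacian_trace_norm_difference :
    (∀ n : ℕ, 2 ≤ n →
      traceNorm (1 - cycleAdj n) - traceNorm (outDeg (pathAdj n) - pathAdj n)
        = 1 - Real.tan (Real.pi / (4 * n)) ∧
      0 < 1 - Real.tan (Real.pi / (4 * n))) ∧
    (∀ m n : ℕ, 2 ≤ m → m < n →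
      1 - Real.tan (Real.pi / (4 * m)) < 1 - Real.tan (Real.pi / (4 * n))) ∧
    Filter.Tendsto (fun n : ℕ => 1 - Real.tan (Real.pi / (4 * n))) Filter.atTop (nhds 1) ∧
    (∀ n : ℕ, 2 ≤ n →
      traceNorm (outDeg (pathAdj n) - pathAdj n) < traceNorm (1 - cycleAdj n)) := by
  exact ⟨fun n hn => ⟨aux_diff n hn, aux_pos n hn⟩,
    fun m n hm h => sub_lt_sub_left (aux_mono m n (by omega) h) 1, aux_lim,
    fun n hn => by linarith [aux_diff n hn, aux_pos n hn]⟩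
end

section
/- For every n ≥ 2, the trace norms of the signless Laplacian and Laplacian of the directed cycle satisfy ‖Q(C⃗_n)‖_* ≥ ‖L(C⃗_n)‖_*, with equality if and only if n is even; when n is odd, ‖Q(C⃗_n)‖_* − ‖L(C⃗_n)‖_* = 2·csc(π/(2n)) − 2·cot(π/(2n)) = 2·tan(π/(4n)) > 0. -/
open Matrix

lemma aux_shift (n : ℕ) (f : ℕ → ℝ) (hf : ∀ k, f (k + n) = f k) (m : ℕ) :
    ∑ k ∈ Finset.range n, f (k + m) = ∑ k ∈ Finset.range n, f k := by
  induction m with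
  | zero => simp
  | succ m ih =>
    rw [← ih]
    have h1 := Finset.sum_range_succ (fun k => f (k + m)) n
    have h2 := Finset.sum_range_succ' (fun k => f (k + m)) n
    have h3 : f (n + m) = f (0 + m) := by rw [add_comm n m, hf]; simp
    have h4 : ∀ k, f (k + (m + 1)) = f (k + 1 + m) := fun k => by congr 1; ring
    simp only [h4]
    linarith

lemma aux_sin (n : ℕ) (hn : 2 ≤ n) :
    ∑ k ∈ Finset.range n, |Real.sin (Real.pi * k / n)| = Real.cot (Real.pi / (2 * n)) := by
  have hn0 : (0 : ℝ) < n := by positivity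
  have hs : 0 < Real.sin (Real.pi / (2 * n)) := by
    apply Real.sin_pos_of_pos_of_lt_pi (by positivity)
    rw [div_lt_iff₀ (by positivity)]
    have : (2 : ℝ) ≤ n := by exact_mod_cast hn
    nlinarith [Real.pi_pos]
  have h1 : ∀ k ∈ Finset.range n, |Real.sin (Real.pi * k / n)| * (2 * Real.sin (Real.pi / (2 * n)))
      = (fun k : ℕ => -Real.cos (Real.pi * (2 * k - 1) / (2 * n))) (k + 1) - (fun k : ℕ => -Real.cos (Real.pi * (2 * k - 1) / (2 * n))) k := by
    intro k hk
    have hk' : (k : ℝ) < n := by exact_mod_cast Finset.mem_range.mp hk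
    rw [abs_of_nonneg]
    · have e1 : Real.pi * (2 * ((k + 1 : ℕ) : ℝ) - 1) / (2 * n) = Real.pi * k / n + Real.pi / (2 * n) := by
        push_cast; field_simp; ring
      have e2 : Real.pi * (2 * (k : ℝ) - 1) / (2 * n) = Real.pi * k / n - Real.pi / (2 * n) := by
        field_simp
      simp only [e1, e2, Real.cos_add, Real.cos_sub]
      ring
    · apply Real.sin_nonneg_of_nonneg_of_le_pi (by positivity)
      rw [div_le_iff₀ hn0]
      nlinarith [Real.pi_pos]
  have h2 := Finset.sum_congr rfl h1
  rw [← Finset.sum_mul] at h2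
  replace h2 := h2.trans (Finset.sum_range_sub (fun k : ℕ => -Real.cos (Real.pi * (2 * k - 1) / (2 * n))) n)
  have e3 : Real.pi * (2 * (n : ℝ) - 1) / (2 * n) = Real.pi - Real.pi / (2 * n) := by
    field_simp
  have e4 : Real.pi * (2 * ((0 : ℕ) : ℝ) - 1) / (2 * n) = - (Real.pi / (2 * n)) := by
    push_cast; field_simp; ring
  rw [e3, e4, Real.cos_pi_sub, Real.cos_neg] at h2
  rw [Real.cot_eq_cos_div_sin, eq_div_iff hs.ne']
  linarith

lemma aux_csc (n : ℕ) (hn : 2 ≤ n) :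
    ∑ k ∈ Finset.range n, |Real.sin (Real.pi * (2 * k + 1) / (2 * n))| = (Real.sin (Real.pi / (2 * n)))⁻¹ := by
  have hn0 : (0 : ℝ) < n := by positivity
  have hs : 0 < Real.sin (Real.pi / (2 * n)) := by
    apply Real.sin_pos_of_pos_of_lt_pi (by positivity)
    rw [div_lt_iff₀ (by positivity)]
    have : (2 : ℝ) ≤ n := by exact_mod_cast hn
    nlinarith [Real.pi_pos]
  have h1 : ∀ k ∈ Finset.range n, |Real.sin (Real.pi * (2 * k + 1) / (2 * n))| * (2 * Real.sin (Real.pi / (2 * n)))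
      = (fun k : ℕ => -Real.cos (Real.pi * k / n)) (k + 1) - (fun k : ℕ => -Real.cos (Real.pi * k / n)) k := by
    intro k hk
    have hk' : (k : ℝ) + 1 ≤ n := by exact_mod_cast Finset.mem_range.mp hk
    rw [abs_of_nonneg]
    · have e1 : Real.pi * ((k + 1 : ℕ) : ℝ) / n = Real.pi * (2 * k + 1) / (2 * n) + Real.pi / (2 * n) := by
        push_cast; field_simp; ring
      have e2 : Real.pi * (k : ℝ) / n = Real.pi * (2 * k + 1) / (2 * n) - Real.pi / (2 * n) := by
        field_simp; ring
      simp only [e1, e2, Real.cos_add, Real.cos_sub]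
      ring
    · apply Real.sin_nonneg_of_nonneg_of_le_pi (by positivity)
      rw [div_le_iff₀ (by positivity)]
      nlinarith [Real.pi_pos]
  have h2 := Finset.sum_congr rfl h1
  rw [← Finset.sum_mul] at h2
  replace h2 := h2.trans (Finset.sum_range_sub (fun k : ℕ => -Real.cos (Real.pi * k / n)) n)
  have e3 : Real.pi * (n : ℝ) / n = Real.pi := by
    field_simp
  have e4 : Real.pi * ((0 : ℕ) : ℝ) / n = 0 := by simp
  rw [e3, e4, Real.cos_pi, Real.cos_zero] at h2
  apply eq_inv_of_mul_eq_one_left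
  linarith

lemma aux_cos_per (n : ℕ) (hn : 2 ≤ n) (k : ℕ) :
    |Real.cos (Real.pi * ((k + n : ℕ) : ℝ) / n)| = |Real.cos (Real.pi * k / n)| := by
  have hn0 : (0 : ℝ) < n := by positivity
  have : Real.pi * ((k + n : ℕ) : ℝ) / n = Real.pi * k / n + Real.pi := by
    push_cast; field_simp
  rw [this, Real.cos_add_pi, abs_neg]

lemma aux_cos_even (n : ℕ) (hn : 2 ≤ n) (h : Even n) :
    ∑ k ∈ Finset.range n, |Real.cos (Real.pi * k / n)| = Real.cot (Real.pi / (2 * n)) := by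
  obtain ⟨m, hm⟩ := h
  rw [← aux_shift n (fun k : ℕ => |Real.cos (Real.pi * k / n)|) (aux_cos_per n hn) m, ← aux_sin n hn]
  refine Finset.sum_congr rfl fun k _ => ?_
  have hn0 : (0 : ℝ) < n := by positivity
  have hm' : (m : ℝ) = n / 2 := by rw [hm]; push_cast; ring
  have : Real.pi * ((k + m : ℕ) : ℝ) / n = Real.pi * k / n + Real.pi / 2 := by
    push_cast; rw [hm']; field_simp
  simp only [this, Real.cos_add_pi_div_two, abs_neg]

lemma aux_cos_odd (n : ℕ) (hn : 2 ≤ n) (h : Odd n) :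
    ∑ k ∈ Finset.range n, |Real.cos (Real.pi * k / n)| = (Real.sin (Real.pi / (2 * n)))⁻¹ := by
  obtain ⟨m, hm⟩ := h
  rw [← aux_shift n (fun k : ℕ => |Real.cos (Real.pi * k / n)|) (aux_cos_per n hn) (m + 1), ← aux_csc n hn]
  refine Finset.sum_congr rfl fun k _ => ?_
  have hn0 : (0 : ℝ) < n := by positivity
  have hm' : (m : ℝ) = (n - 1) / 2 := by rw [hm]; push_cast; ring
  have : Real.pi * ((k + (m + 1) : ℕ) : ℝ) / n = Real.pi * (2 * k + 1) / (2 * n) + Real.pi / 2 := by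
    push_cast; rw [hm']; field_simp; ring
  simp only [this, Real.cos_add_pi_div_two, abs_neg]

lemma aux_charpoly_s11 (n : ℕ) (hn : 2 ≤ n) (e : ℝ) (he : e ^ 2 = 1) :
    ((1 + e • cycleAdj n) * (1 + e • cycleAdj n)ᵀ).charpoly
      = ∏ k : Fin n, (Polynomial.X - Polynomial.C (2 + 2 * e * Real.cos (2 * (Real.pi * (k : ℕ) / n)))) := by
  obtain ⟨N, rfl⟩ : ∃ N, n = N + 1 := ⟨n - 1, by omega⟩
  set n := N + 1 with hN
  have hprim := Complex.isPrimitiveRoot_exp n (by omega)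
  set w := Complex.exp (2 * Real.pi * Complex.I / n) with hw
  have hw0 : w ≠ 0 := Complex.exp_ne_zero _
  let F : Matrix (Fin n) (Fin n) ℂ := fun i k => w ^ ((i : ℕ) * (k : ℕ))
  have hA : ∀ i j : Fin n, cycleAdj n i j = if j = i + 1 then 1 else 0 := by
    intro i j
    have : ((i + 1 : Fin n) : ℕ) = ((i : ℕ) + 1) % n := by
      rw [Fin.val_add]; simp [hN]
    simp only [cycleAdj, Fin.ext_iff, this]
  have hF : ∀ i k : Fin n, F (i + 1) k = w ^ (k : ℕ) * F i k := by
    intro i k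
    have : ((i + 1 : Fin n) : ℕ) = ((i : ℕ) + 1) % n := by
      rw [Fin.val_add]; simp [hN]
    simp only [F, this]
    rw [pow_mul, ← pow_eq_pow_mod _ hprim.pow_eq_one, ← pow_mul, ← pow_add]
    congr 1; ring
  have hF' : ∀ i k : Fin n, F (i - 1) k = (w ^ (k : ℕ))⁻¹ * F i k := by
    intro i k
    have := hF (i - 1) k
    rw [sub_add_cancel] at this
    rw [this, inv_mul_cancel_left₀ (pow_ne_zero _ hw0)]
  let A : Matrix (Fin n) (Fin n) ℂ := (cycleAdj n).map Complex.ofRealHom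
  have hA1 : ∀ i j : Fin n, A i j = if j = i + 1 then 1 else 0 := by
    intro i j; simp only [A, Matrix.map_apply, hA]; split_ifs <;> simp
  have hAF : A * F = F * diagonal (fun k : Fin n => w ^ (k : ℕ)) := by
    ext i k
    rw [Matrix.mul_diagonal, Matrix.mul_apply]
    simp [hA1, hF, mul_comm]
  have hAF' : Aᵀ * F = F * diagonal (fun k : Fin n => (w ^ (k : ℕ))⁻¹) := by
    ext i k
    rw [Matrix.mul_diagonal, Matrix.mul_apply]
    have : ∀ j : Fin n, (i = j + 1) ↔ (j = i - 1) := fun j => by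
      rw [eq_sub_iff_add_eq, eq_comm]
    simp [hA1, this, hF', mul_comm]
  let D : Matrix (Fin n) (Fin n) ℂ := diagonal fun k : Fin n => ((2 + 2 * e * Real.cos (2 * (Real.pi * (k : ℕ) / n)) : ℝ) : ℂ)
  have he' : (e : ℂ) ^ 2 = 1 := by exact_mod_cast he
  have hdet : IsUnit F.det := by
    have : F = (Matrix.vandermonde (fun i : Fin n => w ^ (i : ℕ))) := by
      ext i k; simp [F, Matrix.vandermonde_apply, pow_mul]
    rw [this, isUnit_iff_ne_zero, Matrix.det_vandermonde_ne_zero_iff]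
    intro i j hij
    exact Fin.ext (hprim.pow_inj i.2 j.2 hij)
  have hMF : ((1 + (e : ℂ) • A) * (1 + (e : ℂ) • A)ᵀ) * F = F * D := by
    have hD : D = (1 + (e : ℂ) • diagonal (fun k : Fin n => w ^ (k : ℕ))) * (1 + (e : ℂ) • diagonal (fun k : Fin n => (w ^ (k : ℕ))⁻¹)) := by
      rw [← Matrix.diagonal_one, ← Matrix.diagonal_smul, ← Matrix.diagonal_smul, Matrix.diagonal_add, Matrix.diagonal_add, Matrix.diagonal_mul_diagonal]
      refine congrArg diagonal (funext fun k => ?_)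
      have hz : w ^ (k : ℕ) = Complex.exp (((2 * (Real.pi * (k : ℕ) / n) : ℝ) : ℂ) * Complex.I) := by
        rw [hw, ← Complex.exp_nat_mul]; congr 1; push_cast; ring
      have hz' : (w ^ (k : ℕ))⁻¹ = Complex.exp (-((2 * (Real.pi * (k : ℕ) / n) : ℝ) : ℂ) * Complex.I) := by
        rw [hz, ← Complex.exp_neg]; congr 1; ring
      have hc := Complex.two_cos ((2 * (Real.pi * (k : ℕ) / n) : ℝ) : ℂ)
      rw [← hz, ← hz', ← Complex.ofReal_cos] at hc
      have hm : w ^ (k : ℕ) * (w ^ (k : ℕ))⁻¹ = 1 := mul_inv_cancel₀ (pow_ne_zero _ hw0)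
      rw [Complex.ofReal_add, Complex.ofReal_mul, Complex.ofReal_mul]
      simp only [Pi.smul_apply, smul_eq_mul, Complex.ofReal_ofNat]
      linear_combination (e : ℂ) * hc - (e : ℂ) ^ 2 * hm - he'
    have h1 : (1 + (e : ℂ) • A) * F = F * (1 + (e : ℂ) • diagonal (fun k : Fin n => w ^ (k : ℕ))) := by
      simp [add_mul, mul_add, hAF]
    have h2 : (1 + (e : ℂ) • A)ᵀ * F = F * (1 + (e : ℂ) • diagonal (fun k : Fin n => (w ^ (k : ℕ))⁻¹)) := by
      simp [add_mul, mul_add, hAF']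
    rw [hD, Matrix.mul_assoc, h2, ← Matrix.mul_assoc, h1, Matrix.mul_assoc]
  have hcp : ((1 + (e : ℂ) • A) * (1 + (e : ℂ) • A)ᵀ).charpoly = D.charpoly := by
    have : ((1 + (e : ℂ) • A) * (1 + (e : ℂ) • A)ᵀ) = F * D * F⁻¹ := by
      rw [← hMF, Matrix.mul_nonsing_inv_cancel_right _ _ hdet]
    rw [this, Matrix.charpoly_mul_comm, Matrix.nonsing_inv_mul_cancel_left _ _ hdet]
  apply Polynomial.map_injective Complex.ofRealHom Complex.ofRealHom.injective
  rw [← Matrix.charpoly_map, Polynomial.map_prod]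
  have hmap : ((1 + e • cycleAdj n) * (1 + e • cycleAdj n)ᵀ).map Complex.ofRealHom
      = (1 + (e : ℂ) • A) * (1 + (e : ℂ) • A)ᵀ := by
    have : (1 + e • cycleAdj n).map Complex.ofRealHom = 1 + (e : ℂ) • A := by
      ext i j
      simp [A, Matrix.one_apply]
      split_ifs <;> simp
    rw [Matrix.map_mul, Matrix.transpose_map, this]
  rw [hmap, hcp, Matrix.charpoly_diagonal]
  refine Finset.prod_congr rfl fun k _ => ?_
  simp

lemma aux_tn (n : ℕ) (hn : 2 ≤ n) (e : ℝ) (he : e ^ 2 = 1) :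
    traceNorm (1 + e • cycleAdj n)
      = ∑ k ∈ Finset.range n, Real.sqrt (2 + 2 * e * Real.cos (2 * (Real.pi * k / n))) := by
  rw [traceNorm, singularValues, aux_charpoly_s11 n hn e he, Finset.sum_range,
    Polynomial.roots_prod _ _ (Finset.prod_ne_zero_iff.mpr fun k _ => Polynomial.X_sub_C_ne_zero _)]
  simp only [Polynomial.roots_X_sub_C, Multiset.bind_singleton, Multiset.map_map]
  rfl

lemma aux_plus (n : ℕ) (hn : 2 ≤ n) :
    traceNorm (1 + cycleAdj n) = 2 * ∑ k ∈ Finset.range n, |Real.cos (Real.pi * k / n)| := by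
  have := aux_tn n hn 1 (by norm_num)
  rw [one_smul] at this
  rw [this, Finset.mul_sum]
  refine Finset.sum_congr rfl fun k _ => ?_
  rw [Real.cos_two_mul, show ∀ x : ℝ, 2 + 2 * 1 * (2 * x ^ 2 - 1) = (2 * x) ^ 2 from fun x => by ring,
    Real.sqrt_sq_eq_abs, abs_mul, abs_two]

lemma aux_minus (n : ℕ) (hn : 2 ≤ n) :
    traceNorm (1 - cycleAdj n) = 2 * Real.cot (Real.pi / (2 * n)) := by
  have := aux_tn n hn (-1) (by norm_num)
  rw [neg_one_smul, ← sub_eq_add_neg] at this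
  rw [this, ← aux_sin n hn, Finset.mul_sum]
  refine Finset.sum_congr rfl fun k _ => ?_
  rw [Real.cos_two_mul, Real.cos_sq', show ∀ x : ℝ, 2 + 2 * (-1) * (2 * (1 - x ^ 2) - 1) = (2 * x) ^ 2 from fun x => by ring,
    Real.sqrt_sq_eq_abs, abs_mul, abs_two]

lemma aux_tan (n : ℕ) (hn : 2 ≤ n) : 0 < Real.tan (Real.pi / (4 * n)) ∧
    (Real.sin (Real.pi / (2 * n)))⁻¹ - Real.cot (Real.pi / (2 * n)) = Real.tan (Real.pi / (4 * n)) := by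
  have hn0 : (2 : ℝ) ≤ n := by exact_mod_cast hn
  have h0 : 0 < Real.pi / (4 * n) := by positivity
  have h1 : Real.pi / (4 * n) < Real.pi / 2 := by
    apply div_lt_div_of_pos_left Real.pi_pos <;> linarith
  refine ⟨Real.tan_pos_of_pos_of_lt_pi_div_two h0 h1, ?_⟩
  have h2 : Real.pi / (2 * n) = 2 * (Real.pi / (4 * n)) := by field_simp; norm_num
  have hs := Real.sin_pos_of_pos_of_lt_pi h0 (by linarith [Real.pi_pos])
  have hc := Real.cos_pos_of_mem_Ioo ⟨by linarith, h1⟩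
  rw [h2, Real.cot_eq_cos_div_sin, Real.tan_eq_sin_div_cos, Real.cos_two_mul, Real.cos_sq', Real.sin_two_mul]
  field_simp
  ring

theorem cycle_signless_vs_laplacian_trace_norm (n : ℕ) (hn : 2 ≤ n) :
    traceNorm (1 - cycleAdj n) ≤ traceNorm (1 + cycleAdj n) ∧
    (traceNorm (1 + cycleAdj n) = traceNorm (1 - cycleAdj n) ↔ Even n) ∧
    (Odd n →
      traceNorm (1 + cycleAdj n) - traceNorm (1 - cycleAdj n)
        = 2 * (Real.sin (Real.pi / (2 * n)))⁻¹ - 2 * Real.cot (Real.pi / (2 * n)) ∧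
      traceNorm (1 + cycleAdj n) - traceNorm (1 - cycleAdj n)
        = 2 * Real.tan (Real.pi / (4 * n)) ∧
      0 < 2 * Real.tan (Real.pi / (4 * n))) := by
  obtain ⟨ht, hd⟩ := aux_tan n hn
  rw [aux_plus n hn, aux_minus n hn]
  rcases Nat.even_or_odd n with h | h
  · rw [aux_cos_even n hn h]
    exact ⟨le_rfl, by simp [h], fun h' => absurd h (Nat.not_even_iff_odd.mpr h')⟩
  · rw [aux_cos_odd n hn h]
    refine ⟨by linarith, ⟨fun h' => by linarith, fun h' => absurd h' (Nat.not_even_iff_odd.mpr h)⟩,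
      fun _ => ⟨rfl, by linarith, by linarith⟩⟩
end
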